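/- arXiv:2011.14452 — 2 statements merged into one kernel-verified Lean document; each statement's English description precedes it below -/
import Mathlib

section
/- Sufficiency direction of Theorem 1 (kernel part, even case): Let H be a real inner product space, D ≥ 1, a : ℝ^D → H an atom map, K ≥ 1, M = 2K, θ_1, …, θ_M ∈ ℝ^D, λ_1, …, λ_K > 0 and ω_1, …, ω_K ∈ ℝ^D. Assume the Gram matrix G of {a(θ_j)}_{j=1}^M is invertible and satisfies G(l, j) = Σ_{k=1}^K λ_k cos(⟨ω_k, θ_l − θ_j⟩) for all l, j. Define c_m(θ) = Σ_{k=1}^K λ_k cos(⟨ω_k, θ − θ_m⟩), v_m = Σ_{j=1}^M G⁻¹(m, j) a(θ_j), and h(θ) = Σ_{m=1}^M c_m(θ) v_m. Then ⟨h(θ), h(θ')⟩ = Σ_{k=1}^K λ_k cos(⟨ω_k, θ − θ'⟩) for all θ, θ' ∈ ℝ^D. -/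
open RealInnerProductSpace

/-!
Splitting `cos (x - y)` writes the kernel as `B (φ s) (φ t)`, where `B` is a bilinear form on the
`2K`-dimensional space of cosine and sine features. Since the Gram matrix is invertible and there
are `2K` atoms, the features `φ (θ m)` form a basis. The map `h` factors as `L ∘ φ` with `L` linear,
and the dual vectors are such that `h` hinterp the atoms: `h (θ m) = a (θ m)`. Hence the
bilinear forms `⟪L x, L y⟫` and `B x y` agree on a basis, so they are equal.
-/

section BilinForm

open Module

lemma linearIndependent_of_isUnit_bilinForm {R V ι : Type*} [CommRing R] [AddCommGroup V]
    [Module R V] [Fintype ι] [DecidableEq ι] (B : LinearMap.BilinForm R V) {w : ι → V}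
    {G : Matrix ι ι R} (hG : IsUnit G) (hGB : ∀ i j, G i j = B (w i) (w j)) :
    LinearIndependent R w := by
  refine Fintype.linearIndependent_iff.2 fun g hg => congrFun ?_
  refine Matrix.vecMul_injective_of_isUnit hG ?_
  ext j
  calc Matrix.vecMul g G j = B (∑ i, g i • w i) (w j) := by
        simp [Matrix.vecMul, dotProduct, hGB]
    _ = Matrix.vecMul 0 G j := by simp [hg]

lemma sum_smul_sum_inv_smul {R N ι : Type*} [CommRing R] [AddCommMonoid N] [Module R N]
    [Fintype ι] [DecidableEq ι] {G : Matrix ι ι R} (hG : IsUnit G) (u : ι → N) (l : ι) :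
    ∑ m, G l m • ∑ j, G⁻¹ m j • u j = u l := by
  calc ∑ m, G l m • ∑ j, G⁻¹ m j • u j = ∑ j, (G * G⁻¹) l j • u j := by
        simp only [Finset.smul_sum, smul_smul, Matrix.mul_apply, Finset.sum_smul]
        exact Finset.sum_comm
    _ = u l := by
        simp [Matrix.mul_nonsing_inv G ((Matrix.isUnit_iff_isUnit_det G).1 hG),
          Matrix.one_apply]

variable {V H ι : Type*} [AddCommGroup V] [Module ℝ V] [SeminormedAddCommGroup H]
  [InnerProductSpace ℝ H]

lemma inner_map_map_of_basis (b : Basis ι ℝ V) (B : LinearMap.BilinForm ℝ V) (L : V →ₗ[ℝ] H)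
    (hL : ∀ i j, ⟪L (b i), L (b j)⟫ = B (b i) (b j)) (x y : V) : ⟪L x, L y⟫ = B x y := by
  have hB : (innerₗ H).compl₁₂ L L = B := LinearMap.BilinForm.ext_basis b hL
  exact LinearMap.congr_fun₂ hB x y

variable [Fintype ι] [DecidableEq ι]

lemma inner_sum_bilinForm_smul_dual [FiniteDimensional ℝ V] (B : LinearMap.BilinForm ℝ V)
    (w : ι → V) (hcard : Fintype.card ι = finrank ℝ V) {G : Matrix ι ι ℝ} (hG : IsUnit G)
    (hGB : ∀ i j, G i j = B (w i) (w j)) (u : ι → H) (hGu : ∀ i j, G i j = ⟪u i, u j⟫)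
    (x y : V) :
    ⟪∑ m, B x (w m) • ∑ j, G⁻¹ m j • u j, ∑ m, B y (w m) • ∑ j, G⁻¹ m j • u j⟫ = B x y := by
  have hindep : LinearIndependent ℝ w := linearIndependent_of_isUnit_bilinForm B hG hGB
  let b : Basis ι ℝ V := basisOfLinearIndependentOfCardEqFinrank' w hindep hcard
  have hb : ∀ i, b i = w i := fun i => by simp [b]
  let L : V →ₗ[ℝ] H := ∑ m, (B.flip (w m)).smulRight (∑ j, G⁻¹ m j • u j)
  have hL : ∀ z, L z = ∑ m, B z (w m) • ∑ j, G⁻¹ m j • u j := fun z => by simp [L]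
  have hinterp : ∀ i, L (b i) = u i := fun i => by
    simp only [hb, hL, ← hGB, sum_smul_sum_inv_smul hG]
  rw [← hL, ← hL]
  refine inner_map_map_of_basis b B L (fun i j => ?_) x y
  rw [hinterp, hinterp, hb, hb, ← hGu, hGB]

end BilinForm

section Trigonometric

variable {E κ : Type*} [SeminormedAddCommGroup E] [InnerProductSpace ℝ E]

/-- The feature vector of a point `t`: the cosines (left summand) and sines (right summand) of its
phases `⟪ω k, t⟫`. It realizes the cosine kernel with frequencies `ω` as a bilinear form. -/
noncomputable def trigFeatures (ω : κ → E) (t : E) : κ ⊕ κ → ℝ :=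
  Sum.elim (fun k => Real.cos ⟪ω k, t⟫) (fun k => Real.sin ⟪ω k, t⟫)

/-- The diagonal bilinear form on feature vectors in which the cosine and the sine of index `k` both
have weight `lam k`. -/
noncomputable def trigForm [Fintype κ] [DecidableEq κ] (lam : κ → ℝ) :
    LinearMap.BilinForm ℝ (κ ⊕ κ → ℝ) :=
  Matrix.toBilin' (Matrix.diagonal (Sum.elim lam lam))

lemma trigForm_trigFeatures [Fintype κ] [DecidableEq κ] (lam : κ → ℝ) (ω : κ → E) (s t : E) :
    trigForm lam (trigFeatures ω s) (trigFeatures ω t) =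
      ∑ k, lam k * Real.cos ⟪ω k, s - t⟫ := by
  simp only [trigForm, trigFeatures, Matrix.toBilin'_apply', dotProduct, Matrix.mulVec_diagonal,
    Fintype.sum_sum_type, Sum.elim_inl, Sum.elim_inr, ← Finset.sum_add_distrib, inner_sub_right,
    Real.cos_sub]
  exact Finset.sum_congr rfl fun k _ => by ring

theorem lowrank_kernel_even_general {H ι : Type*} [SeminormedAddCommGroup H]
    [InnerProductSpace ℝ H] [Fintype ι] [DecidableEq ι] [Fintype κ]
    (hcard : Fintype.card ι = 2 * Fintype.card κ) (u : ι → H) (θ : ι → E) (lam : κ → ℝ)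
    (ω : κ → E) {G : Matrix ι ι ℝ} (hG : IsUnit G) (hGu : ∀ l j, G l j = ⟪u l, u j⟫)
    (hdecomp : ∀ l j, G l j = ∑ k, lam k * Real.cos ⟪ω k, θ l - θ j⟫) (t t' : E) :
    ⟪∑ m, (∑ k, lam k * Real.cos ⟪ω k, t - θ m⟫) • ∑ j, G⁻¹ m j • u j,
      ∑ m, (∑ k, lam k * Real.cos ⟪ω k, t' - θ m⟫) • ∑ j, G⁻¹ m j • u j⟫ =
      ∑ k, lam k * Real.cos ⟪ω k, t - t'⟫ := by
  classical
  have hfinrank : Fintype.card ι = Module.finrank ℝ (κ ⊕ κ → ℝ) := by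
    rw [hcard, Module.finrank_fintype_fun_eq_card, Fintype.card_sum, two_mul]
  simp only [← trigForm_trigFeatures] at hdecomp ⊢
  exact inner_sum_bilinForm_smul_dual (trigForm lam) (fun m => trigFeatures ω (θ m)) hfinrank hG
    hdecomp u hGu _ _

end Trigonometric

/-- **Sufficiency direction of Theorem 1 (kernel part, even case `M = 2K`).**
If the Gram matrix of `M = 2K` atoms is invertible and admits a raised-cosine
decomposition with zero offset (`λ₀ = 0`) and `λ_k > 0`, then the low-rank
approximation `h θ = ∑ m, c m θ • v m` reproduces the same kernel everywhere. -/
theorem lowrank_kernel_even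
    {H : Type*} [NormedAddCommGroup H] [InnerProductSpace ℝ H]
    {D : ℕ} (hD : 1 ≤ D) {K : ℕ} (hK : 1 ≤ K)
    (a : EuclideanSpace ℝ (Fin D) → H)
    (θ : Fin (2 * K) → EuclideanSpace ℝ (Fin D))
    (lam : Fin K → ℝ) (hlam : ∀ k, 0 < lam k)
    (ω : Fin K → EuclideanSpace ℝ (Fin D))
    (G : Matrix (Fin (2 * K)) (Fin (2 * K)) ℝ)
    (hG : ∀ l j, G l j = ⟪a (θ l), a (θ j)⟫)
    (hGinv : Invertible G)
    (hdecomp : ∀ l j, G l j = ∑ k : Fin K, lam k * Real.cos ⟪ω k, θ l - θ j⟫)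
    (c : Fin (2 * K) → EuclideanSpace ℝ (Fin D) → ℝ)
    (hc : ∀ m t, c m t = ∑ k : Fin K, lam k * Real.cos ⟪ω k, t - θ m⟫)
    (v : Fin (2 * K) → H)
    (hv : ∀ m, v m = ∑ j : Fin (2 * K), G⁻¹ m j • a (θ j))
    (h : EuclideanSpace ℝ (Fin D) → H)
    (hh : ∀ t, h t = ∑ m : Fin (2 * K), c m t • v m) :
    ∀ t t' : EuclideanSpace ℝ (Fin D),
      ⟪h t, h t'⟫ = ∑ k : Fin K, lam k * Real.cos ⟪ω k, t - t'⟫ := by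
  simpa only [hh, hc, hv] using lowrank_kernel_even_general (by simp) (fun j => a (θ j)) θ lam ω
    (isUnit_of_invertible G) hG hdecomp
end

section
/- Combined sufficiency (Theorem 1, converse, odd case): Under the hypotheses that M = 2K + 1, λ_0 > 0, λ_1, …, λ_K > 0, the Gram matrix G of {a(θ_j)}_{j=1}^M is invertible and G(l, j) = λ_0 + Σ_{k=1}^K λ_k cos(⟨ω_k, θ_l − θ_j⟩) for all l, j, the low-rank approximation h(θ) = Σ_{m=1}^M c_m(θ) v_m with c_m(θ) = λ_0 + Σ_{k=1}^K λ_k cos(⟨ω_k, θ − θ_m⟩) and v_m = Σ_{j=1}^M G⁻¹(m, j) a(θ_j) simultaneously (i) interpolates all atoms, h(θ_j) = a(θ_j) for j = 1, …, M, and (ii) satisfies the raised-cosine kernel identity ⟨h(θ), h(θ')⟩ = λ_0 + Σ_{k=1}^K λ_k cos(⟨ω_k, θ − θ'⟩) for all θ, θ' ∈ ℝ^D. -/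
open RealInnerProductSpace

/-!
Two mechanisms are at work. Interpolation is the identity `G * G⁻¹ = 1` read on the atoms, since
the coefficients of `h (θ j)` form the `j`-th row of `G`. For the kernel identity, the addition
formula for the cosine factors the raised-cosine kernel through `2 * K + 1` features, so `G` is a
product `A * B` of two *square* matrices. Then `B * (A * B)⁻¹ * A = 1`, which says that the
low-rank (Nyström) reconstruction of the kernel from its values against the sample points is exact.
-/

open Matrix

section CrossReconstruction

variable {m n R : Type*} [Fintype m] [Fintype n] [DecidableEq m] [CommRing R]

theorem mul_inv_mul_eq_one_of_card_eq [DecidableEq n] (hcard : Fintype.card m = Fintype.card n)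
    (A : Matrix m n R) (B : Matrix n m R) (hAB : IsUnit (A * B).det) :
    B * (A * B)⁻¹ * A = 1 := by
  have hright : A * (B * (A * B)⁻¹) = 1 := by rw [← Matrix.mul_assoc, mul_nonsing_inv _ hAB]
  exact (mul_eq_one_comm_of_card_eq _ _ _ hcard).mp hright

theorem cross_reconstruction_of_card_eq {X Y : Type*} (hcard : Fintype.card m = Fintype.card n)
    {k : X → Y → R} (f : X → n → R) (g : Y → n → R) (hk : ∀ x y, k x y = f x ⬝ᵥ g y)
    (p : m → X) (q : m → Y) (hdet : IsUnit (of fun i j => k (p i) (q j)).det) (x : X) (y : Y) :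
    (fun j => k x (q j)) ⬝ᵥ ((of fun i j => k (p i) (q j))⁻¹ *ᵥ fun i => k (p i) y) = k x y := by
  classical
  let A : Matrix m n R := of fun i => f (p i)
  let B : Matrix n m R := (of fun j => g (q j))ᵀ
  have hfactor : (of fun i j => k (p i) (q j)) = A * B := by
    ext i j
    exact hk (p i) (q j)
  have hrow : (fun j => k x (q j)) = f x ᵥ* B := funext fun j => hk x (q j)
  have hcol : (fun i => k (p i) y) = A *ᵥ g y := funext fun i => hk (p i) y
  rw [hfactor] at hdet ⊢
  calc (fun j => k x (q j)) ⬝ᵥ ((A * B)⁻¹ *ᵥ fun i => k (p i) y)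
      = f x ⬝ᵥ ((B * (A * B)⁻¹ * A) *ᵥ g y) := by
        rw [hrow, hcol, ← dotProduct_mulVec, mulVec_mulVec, mulVec_mulVec, Matrix.mul_assoc]
    _ = k x y := by rw [mul_inv_mul_eq_one_of_card_eq hcard A B hdet, one_mulVec, hk]

end CrossReconstruction

section GramDual

variable {ι H : Type*} [Fintype ι] [DecidableEq ι] [SeminormedAddCommGroup H]
  [InnerProductSpace ℝ H]

/-- The family dual to `b` inside the span of `b`, with coefficients given by the inverse Gram
matrix. It is biorthogonal to `b` when the Gram matrix is invertible; otherwise `⁻¹` takes the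
value `0`, and so does the family. -/
noncomputable def gramDual (b : ι → H) (i : ι) : H :=
  ∑ j, (gram ℝ b)⁻¹ i j • b j

variable {b : ι → H} (hdet : IsUnit (gram ℝ b).det)

include hdet

theorem sum_gram_smul_gramDual (j : ι) : ∑ i, gram ℝ b j i • gramDual b i = b j := by
  calc ∑ i, gram ℝ b j i • gramDual b i
      = ∑ l, (gram ℝ b * (gram ℝ b)⁻¹) j l • b l := by
        simp only [gramDual, Finset.smul_sum, smul_smul, mul_apply, Finset.sum_smul]
        exact Finset.sum_comm
    _ = b j := by simp [mul_nonsing_inv _ hdet, one_apply]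

theorem inner_gramDual_right (i j : ι) : ⟪b i, gramDual b j⟫ = (1 : Matrix ι ι ℝ) j i := by
  rw [← nonsing_inv_mul _ hdet, mul_apply, gramDual, inner_sum]
  simp only [inner_smul_right, gram_apply, real_inner_comm]

theorem gram_gramDual : gram ℝ (gramDual b) = (gram ℝ b)⁻¹ := by
  ext i j
  rw [gram_apply, gramDual, sum_inner]
  simp [real_inner_smul_left, inner_gramDual_right hdet, one_apply]

theorem inner_sum_smul_gramDual (x y : ι → ℝ) :
    ⟪∑ i, x i • gramDual b i, ∑ j, y j • gramDual b j⟫ = x ⬝ᵥ ((gram ℝ b)⁻¹ *ᵥ y) := by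
  rw [← gram_gramDual hdet, ← star_dotProduct_gram_mulVec, star_trivial]

end GramDual

section KernelInterpolant

variable {ι X H : Type*} [Fintype ι] [DecidableEq ι] [SeminormedAddCommGroup H]
  [InnerProductSpace ℝ H]

/-- The low-rank approximation of atoms `b` located at the points `p`: the combination of the
dual vectors of `b` whose coefficients at `t` are the kernel values `k t (p i)`. -/
noncomputable def kernelInterpolant (k : X → X → ℝ) (p : ι → X) (b : ι → H) (t : X) : H :=
  ∑ i, k t (p i) • gramDual b i

variable {k : X → X → ℝ} {p : ι → X} {b : ι → H} (hdet : IsUnit (gram ℝ b).det)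
  (hgram : ∀ i j, ⟪b i, b j⟫ = k (p i) (p j))

include hdet hgram

theorem kernelInterpolant_apply_node (j : ι) : kernelInterpolant k p b (p j) = b j := by
  simpa only [kernelInterpolant, gram_apply, hgram] using sum_gram_smul_gramDual hdet j

theorem inner_kernelInterpolant_of_card_eq {n : Type*} [Fintype n]
    (hcard : Fintype.card ι = Fintype.card n) (hsymm : ∀ s t, k s t = k t s)
    (f g : X → n → ℝ) (hk : ∀ s t, k s t = f s ⬝ᵥ g t) (s t : X) :
    ⟪kernelInterpolant k p b s, kernelInterpolant k p b t⟫ = k s t := by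
  have hG : gram ℝ b = of fun i j => k (p i) (p j) := Matrix.ext hgram
  simp only [kernelInterpolant, inner_sum_smul_gramDual hdet, hsymm t]
  rw [hG] at hdet ⊢
  exact cross_reconstruction_of_card_eq hcard f g hk p p hdet s t

end KernelInterpolant

section RaisedCosine

variable {κ V : Type*} [Fintype κ] [SeminormedAddCommGroup V] [InnerProductSpace ℝ V]

/-- The raised-cosine kernel with offset `lam0`, amplitudes `lam` and frequencies `ω`. -/
noncomputable def raisedCosine (lam0 : ℝ) (lam : κ → ℝ) (ω : κ → V) (s t : V) : ℝ :=
  lam0 + ∑ k, lam k * Real.cos ⟪ω k, s - t⟫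

/-- The feature map `(1, cos ⟪ω k, t⟫, sin ⟪ω k, t⟫)` of the raised-cosine kernel, with
`2 * card κ + 1` coordinates. -/
noncomputable def trigFeature (ω : κ → V) (t : V) : Unit ⊕ κ ⊕ κ → ℝ :=
  Sum.elim (fun _ => 1)
    (Sum.elim (fun k => Real.cos ⟪ω k, t⟫) (fun k => Real.sin ⟪ω k, t⟫))

/-- The weights carried by the coordinates of `trigFeature` in the raised-cosine kernel. -/
def trigWeight (lam0 : ℝ) (lam : κ → ℝ) : Unit ⊕ κ ⊕ κ → ℝ :=
  Sum.elim (fun _ => lam0) (Sum.elim lam lam)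

variable (lam0 : ℝ) (lam : κ → ℝ) (ω : κ → V) (s t : V)

theorem raisedCosine_comm : raisedCosine lam0 lam ω s t = raisedCosine lam0 lam ω t s := by
  simp only [raisedCosine, ← neg_sub t s, inner_neg_right, Real.cos_neg]

theorem raisedCosine_eq_dotProduct_trigFeature :
    raisedCosine lam0 lam ω s t =
      (trigWeight lam0 lam * trigFeature ω s) ⬝ᵥ trigFeature ω t := by
  simp only [raisedCosine, trigWeight, trigFeature, dotProduct, Pi.mul_apply,
    Fintype.sum_sum_type, Sum.elim_inl, Sum.elim_inr, Finset.univ_unique, Finset.sum_singleton,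
    mul_one, inner_sub_right, Real.cos_sub, mul_add, mul_assoc, Finset.sum_add_distrib]

end RaisedCosine

theorem lowrank_interp_and_kernel_odd_general
    {ι κ V H : Type*} [Fintype ι] [DecidableEq ι] [Fintype κ]
    [SeminormedAddCommGroup V] [InnerProductSpace ℝ V]
    [SeminormedAddCommGroup H] [InnerProductSpace ℝ H]
    (hcard : Fintype.card ι = 2 * Fintype.card κ + 1) (b : ι → H) (θ : ι → V)
    (lam0 : ℝ) (lam : κ → ℝ) (ω : κ → V) (hdet : IsUnit (gram ℝ b).det)
    (hgram : ∀ l j, ⟪b l, b j⟫ = raisedCosine lam0 lam ω (θ l) (θ j)) :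
    (∀ j, kernelInterpolant (raisedCosine lam0 lam ω) θ b (θ j) = b j) ∧
      ∀ t t', ⟪kernelInterpolant (raisedCosine lam0 lam ω) θ b t,
        kernelInterpolant (raisedCosine lam0 lam ω) θ b t'⟫ = raisedCosine lam0 lam ω t t' := by
  have hcard_features : Fintype.card ι = Fintype.card (Unit ⊕ κ ⊕ κ) := by
    simp only [hcard, Fintype.card_sum, Fintype.card_unit]
    ring
  exact ⟨kernelInterpolant_apply_node hdet hgram,
    inner_kernelInterpolant_of_card_eq hdet hgram hcard_features (raisedCosine_comm lam0 lam ω)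
      _ _ (raisedCosine_eq_dotProduct_trigFeature lam0 lam ω)⟩

/-- **Combined sufficiency (Theorem 1, converse, odd case `M = 2K+1`).**
Under the raised-cosine decomposition of an invertible Gram matrix (with `λ₀ > 0`,
`λ_k > 0`), the low-rank approximation `h θ = ∑ m, c m θ • v m` simultaneously
interpolates all atoms and satisfies the raised-cosine kernel identity. -/
theorem lowrank_interp_and_kernel_odd
    {H : Type*} [NormedAddCommGroup H] [InnerProductSpace ℝ H]
    {D : ℕ} (hD : 1 ≤ D) {K : ℕ}
    (a : EuclideanSpace ℝ (Fin D) → H)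
    (θ : Fin (2 * K + 1) → EuclideanSpace ℝ (Fin D))
    (lam0 : ℝ) (hlam0 : 0 < lam0)
    (lam : Fin K → ℝ) (hlam : ∀ k, 0 < lam k)
    (ω : Fin K → EuclideanSpace ℝ (Fin D))
    (G : Matrix (Fin (2 * K + 1)) (Fin (2 * K + 1)) ℝ)
    (hG : ∀ l j, G l j = ⟪a (θ l), a (θ j)⟫)
    (hGinv : Invertible G)
    (hdecomp : ∀ l j, G l j = lam0 + ∑ k : Fin K, lam k * Real.cos ⟪ω k, θ l - θ j⟫)
    (c : Fin (2 * K + 1) → EuclideanSpace ℝ (Fin D) → ℝ)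
    (hc : ∀ m t, c m t = lam0 + ∑ k : Fin K, lam k * Real.cos ⟪ω k, t - θ m⟫)
    (v : Fin (2 * K + 1) → H)
    (hv : ∀ m, v m = ∑ j : Fin (2 * K + 1), G⁻¹ m j • a (θ j))
    (h : EuclideanSpace ℝ (Fin D) → H)
    (hh : ∀ t, h t = ∑ m : Fin (2 * K + 1), c m t • v m) :
    (∀ j, h (θ j) = a (θ j)) ∧
      (∀ t t' : EuclideanSpace ℝ (Fin D),
        ⟪h t, h t'⟫ = lam0 + ∑ k : Fin K, lam k * Real.cos ⟪ω k, t - t'⟫) := by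
  obtain rfl : G = gram ℝ fun j => a (θ j) := Matrix.ext hG
  obtain rfl : h = kernelInterpolant (raisedCosine lam0 lam ω) θ fun j => a (θ j) :=
    funext fun t => by simp only [hh, hc, hv, kernelInterpolant, raisedCosine, gramDual]
  exact lowrank_interp_and_kernel_odd_general (by simp only [Fintype.card_fin]) _ θ lam0 lam ω
    (isUnit_det_of_invertible _) hdecomp
end
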